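/- Let (f_n)_n be a sequence of meromorphic functions on 𝔻 such that (f_n''/f_n')_n converges locally uniformly on all of 𝔻 to a function F_1 that is holomorphic on 𝔻, and such that f_n' is zero-free on 𝔻 for every n. Then (f_n'/f_n)_n is normal on 𝔻 and no subsequence of (f_n'/f_n)_n converges locally uniformly to the constant ∞ on 𝔻. -/

import Mathlib

open Filter Topology
open scoped Classical

noncomputable section

/-- The chordal (spherical) distance on the Riemann sphere `ℂ ∪ {∞} = OnePoint ℂ`. -/
def sphDist (a b : OnePoint ℂ) : ℝ :=
  Option.elim a (Option.elim b 0 fun w => 2 / Real.sqrt (1 + ‖w‖ ^ 2))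
    fun z =>
      Option.elim b (2 / Real.sqrt (1 + ‖z‖ ^ 2)) fun w =>
        2 * ‖z - w‖ / (Real.sqrt (1 + ‖z‖ ^ 2) * Real.sqrt (1 + ‖w‖ ^ 2))

/-- The set of poles of a function `f : ℂ → ℂ`: the points where `‖f‖` tends to `∞`. -/
def polesOf (f : ℂ → ℂ) : Set ℂ :=
  {z | Filter.Tendsto (fun w => ‖f w‖) (𝓝[≠] z) Filter.atTop}

/-- View a `ℂ`-valued (meromorphic) function as a map into the Riemann sphere:
at its poles the value is `∞`. -/
def toSphere (f : ℂ → ℂ) : ℂ → OnePoint ℂ := fun z =>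
  if z ∈ polesOf f then OnePoint.infty else (f z : OnePoint ℂ)

/-- Locally uniform convergence on `U` of sphere-valued functions, with respect to the
spherical (chordal) metric. -/
def SphLocUnifOn (f : ℕ → ℂ → OnePoint ℂ) (g : ℂ → OnePoint ℂ) (U : Set ℂ) : Prop :=
  ∀ ε > (0 : ℝ), ∀ x ∈ U, ∃ t ∈ 𝓝[U] x,
    ∀ᶠ n in Filter.atTop, ∀ y ∈ t, sphDist (f n y) (g y) < ε

/-- The quotient `f^{(j+1)}/f^{(j)}` of successive derivatives of `f`. -/
def derivQuot (j : ℕ) (f : ℂ → ℂ) : ℂ → ℂ := fun z =>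
  iteratedDeriv (j + 1) f z / iteratedDeriv j f z

/-- The derived set of `E` with respect to `D`: accumulation points of `E` lying in `D`. -/
def derivedSetIn (D E : Set ℂ) : Set ℂ := {z ∈ D | AccPt z (Filter.principal E)}

/-- Iterated derived sets of `E` with respect to `D`. -/
def iteratedDerivedSetIn (D : Set ℂ) : ℕ → Set ℂ → Set ℂ
  | 0, E => E
  | k + 1, E => derivedSetIn D (iteratedDerivedSetIn D k E)

/-- A sequence of functions is `Q_m`-normal on `D`: every subsequence has a further
subsequence converging locally uniformly, with respect to the spherical metric, on `D \ E`
for some set `E ⊆ D` whose `m`-th derived set with respect to `D` is empty. -/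
def QmNormalSeqOn (m : ℕ) (D : Set ℂ) (f : ℕ → ℂ → ℂ) : Prop :=
  ∀ φ : ℕ → ℕ, StrictMono φ → ∃ ψ : ℕ → ℕ, StrictMono ψ ∧
    ∃ E ⊆ D, iteratedDerivedSetIn D m E = ∅ ∧
      ∃ g : ℂ → OnePoint ℂ, SphLocUnifOn (fun k => toSphere (f (φ (ψ k)))) g (D \ E)


/-- The open unit disk in `ℂ`. -/
def unitDisk : Set ℂ := Metric.ball 0 1

/-- The pre-Schwarzian `f''/f'` of `f`. -/
def preSchwarzian (f : ℂ → ℂ) : ℂ → ℂ := fun z => deriv (deriv f) z / deriv f z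

/-- The Schwarzian derivative `S_f = (f''/f')' - (1/2) (f''/f')²` of `f`. -/
def schwarzian (f : ℂ → ℂ) : ℂ → ℂ := fun z =>
  deriv (preSchwarzian f) z - (1 / 2) * preSchwarzian f z ^ 2

/-- `f` has a Schwarzian derivative that is holomorphic on the unit disk and bounded by `M`
there: there is a function `S`, holomorphic on `𝔻` and bounded by `M` on `𝔻`, agreeing with
the pointwise Schwarzian of `f` wherever the latter formula is meaningful (i.e. where `f` is
analytic and `f' ≠ 0`). -/
def HasBddHoloSchwarzian (f : ℂ → ℂ) (M : ℝ) : Prop :=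
  ∃ S : ℂ → ℂ, DifferentiableOn ℂ S unitDisk ∧ (∀ z ∈ unitDisk, ‖S z‖ ≤ M) ∧
    ∀ z ∈ unitDisk, AnalyticAt ℂ f z → deriv f z ≠ 0 → S z = schwarzian f z


/-- The point `[a : b]` of the Riemann sphere, i.e. `a / b`. -/
def sphPt (a b : ℂ) : OnePoint ℂ := if b = 0 then OnePoint.infty else ((a / b : ℂ) : OnePoint ℂ)

lemma sphDist_inf_inf : sphDist OnePoint.infty OnePoint.infty = 0 := rfl

lemma sphDist_inf_coe (w : ℂ) :
    sphDist OnePoint.infty (w : OnePoint ℂ) = 2 / Real.sqrt (1 + ‖w‖ ^ 2) := rfl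

lemma sphDist_coe_inf (w : ℂ) :
    sphDist (w : OnePoint ℂ) OnePoint.infty = 2 / Real.sqrt (1 + ‖w‖ ^ 2) := rfl

lemma sphDist_coe_coe (z w : ℂ) :
    sphDist (z : OnePoint ℂ) (w : OnePoint ℂ) =
      2 * ‖z - w‖ / (Real.sqrt (1 + ‖z‖ ^ 2) * Real.sqrt (1 + ‖w‖ ^ 2)) := rfl

lemma sqrt_quot (a b : ℂ) (hb : b ≠ 0) :
    Real.sqrt (1 + ‖a / b‖ ^ 2) = Real.sqrt (‖a‖ ^ 2 + ‖b‖ ^ 2) / ‖b‖ := by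
  have hb' : 0 < ‖b‖ := norm_pos_iff.2 hb
  rw [show 1 + ‖a / b‖ ^ 2 = (‖a‖ ^ 2 + ‖b‖ ^ 2) / ‖b‖ ^ 2 by rw [norm_div]; field_simp; ring,
    Real.sqrt_div (by positivity), Real.sqrt_sq hb'.le]

lemma sqrt_pos_pair (a b : ℂ) (h : a ≠ 0 ∨ b ≠ 0) : 0 < Real.sqrt (‖a‖ ^ 2 + ‖b‖ ^ 2) := by
  apply Real.sqrt_pos.2
  rcases h with h | h
  · have := norm_pos_iff.2 h
    positivity
  · have := norm_pos_iff.2 h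
    positivity

/-- The chordal distance in homogeneous coordinates. -/
lemma sphDist_sphPt (a b c d : ℂ) (h : a ≠ 0 ∨ b ≠ 0) (h' : c ≠ 0 ∨ d ≠ 0) :
    sphDist (sphPt a b) (sphPt c d) = 2 * ‖a * d - c * b‖ /
      (Real.sqrt (‖a‖ ^ 2 + ‖b‖ ^ 2) * Real.sqrt (‖c‖ ^ 2 + ‖d‖ ^ 2)) := by
  have p1 := sqrt_pos_pair a b h
  have p2 := sqrt_pos_pair c d h'
  by_cases hb : b = 0
  · by_cases hd : d = 0
    · simp [sphPt, hb, hd, sphDist_inf_inf]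
    · have ha : a ≠ 0 := by tauto
      have ha' : 0 < ‖a‖ := norm_pos_iff.2 ha
      have hd' : 0 < ‖d‖ := norm_pos_iff.2 hd
      simp only [sphPt, hb, hd, if_true, if_false, sphDist_inf_coe]
      rw [sqrt_quot _ _ hd]
      have : Real.sqrt (‖a‖ ^ 2 + ‖(0:ℂ)‖ ^ 2) = ‖a‖ := by simp
      rw [this]
      simp only [mul_zero, sub_zero, norm_mul]
      field_simp
  · have hb' : 0 < ‖b‖ := norm_pos_iff.2 hb
    by_cases hd : d = 0
    · have hc : c ≠ 0 := by tauto
      have hc' : 0 < ‖c‖ := norm_pos_iff.2 hc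
      simp only [sphPt, hb, hd, if_true, if_false, sphDist_coe_inf]
      rw [sqrt_quot _ _ hb]
      have : Real.sqrt (‖c‖ ^ 2 + ‖(0:ℂ)‖ ^ 2) = ‖c‖ := by simp
      rw [this]
      simp only [mul_zero, zero_sub, norm_neg, norm_mul]
      field_simp
    · have hd' : 0 < ‖d‖ := norm_pos_iff.2 hd
      simp only [sphPt, hb, hd, if_false, sphDist_coe_coe]
      rw [sqrt_quot _ _ hb, sqrt_quot _ _ hd,
        show a / b - c / d = (a * d - c * b) / (b * d) by field_simp, norm_div, norm_mul b d]
      field_simp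

lemma sphPt_scale (a b c : ℂ) (hc : c ≠ 0) : sphPt (c * a) (c * b) = sphPt a b := by
  by_cases hb : b = 0
  · simp [sphPt, hb]
  · simp only [sphPt, hb, hc, mul_eq_zero, or_self, if_false]
    rw [mul_div_mul_left _ _ hc]

/-- A point of continuity is not a pole. -/
lemma not_mem_polesOf {f : ℂ → ℂ} {z : ℂ} (h : ContinuousAt f z) : z ∉ polesOf f := by
  intro hz
  exact not_tendsto_nhds_of_tendsto_atTop hz _ (h.norm.tendsto.mono_left nhdsWithin_le_nhds)

lemma isOpen_unitDisk : IsOpen unitDisk := Metric.isOpen_ball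

lemma zero_mem_unitDisk : (0 : ℂ) ∈ unitDisk := by simp [unitDisk]

lemma toSphere_logDeriv {f : ℂ → ℂ} (hd : ∀ z ∈ unitDisk, deriv f z ≠ 0) {z : ℂ}
    (hz : z ∈ unitDisk) : toSphere (derivQuot 0 f) z = sphPt (deriv f z) (f z) := by
  have hf : DifferentiableOn ℂ f unitDisk := fun w hw =>
    (differentiableAt_of_deriv_ne_zero (hd w hw)).differentiableWithinAt
  have hD : derivQuot 0 f = fun w => deriv f w / f w := by
    ext w; simp [derivQuot]
  have hc : ContinuousAt (deriv f) z :=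
    ((hf.deriv isOpen_unitDisk).continuousOn.continuousAt (isOpen_unitDisk.mem_nhds hz))
  have hda := differentiableAt_of_deriv_ne_zero (hd z hz)
  rw [hD]
  by_cases h0 : f z = 0
  · have hp : z ∈ polesOf (fun w => deriv f w / f w) := by
      have h1 : Tendsto (fun w => ‖deriv f w‖) (𝓝[≠] z) (𝓝 ‖deriv f z‖) :=
        hc.norm.tendsto.mono_left nhdsWithin_le_nhds
      have h2 : Tendsto (fun w => ‖f w‖) (𝓝[≠] z) (𝓝[>] 0) := by
        apply tendsto_nhdsWithin_iff.2 ⟨?_, ?_⟩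
        · have := hda.continuousAt.norm.tendsto.mono_left (nhdsWithin_le_nhds (s := {z}ᶜ))
          simpa [h0] using this
        · filter_upwards [hda.hasDerivAt.eventually_ne (hd z hz) (c := 0)] with w hw
          exact norm_pos_iff.2 hw
      have h3 := h1.pos_mul_atTop (norm_pos_iff.2 (hd z hz)) h2.inv_tendsto_nhdsGT_zero
      refine h3.congr fun w => ?_
      simp [div_eq_mul_inv]
    simp [toSphere, hp, sphPt, h0]
  · have hp : z ∉ polesOf (fun w => deriv f w / f w) :=
      not_mem_polesOf (hc.div hda.continuousAt h0)
    simp [toSphere, hp, sphPt, h0]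

/-- Spherical locally uniform convergence to a finite continuous limit is Euclidean. -/
lemma tlu_of_sph {P : ℕ → ℂ → ℂ} {F : ℂ → ℂ} (hF : ContinuousOn F unitDisk)
    (h : SphLocUnifOn (fun n z => (P n z : OnePoint ℂ)) (fun z => (F z : OnePoint ℂ)) unitDisk) :
    TendstoLocallyUniformlyOn P F atTop unitDisk := by
  rw [Metric.tendstoLocallyUniformlyOn_iff]
  intro ε hε x hx
  set K : ℝ := 2 + ‖F x‖ with hK
  have hK1 : 1 ≤ K := by rw [hK]; linarith [norm_nonneg (F x)]
  have hK0 : 0 < K := by linarith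
  obtain ⟨t, ht, hn⟩ := h (min (1 / K) (ε / K ^ 2)) (by positivity) x hx
  have hb : ∀ᶠ y in 𝓝[unitDisk] x, ‖F y‖ < 1 + ‖F x‖ :=
    (hF x hx).norm.eventually_lt_const (by linarith)
  refine ⟨t ∩ {y | ‖F y‖ < 1 + ‖F x‖}, inter_mem ht hb, ?_⟩
  filter_upwards [hn] with n hn y hy
  have h1 := hn y hy.1
  have h2 : ‖F y‖ < 1 + ‖F x‖ := hy.2
  rw [sphDist_coe_coe, div_lt_iff₀ (by positivity)] at h1
  set d := ‖P n y - F y‖ with hd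
  have hd0 : 0 ≤ d := norm_nonneg _
  have s1 : ∀ r : ℝ, 0 ≤ r → Real.sqrt (1 + r ^ 2) ≤ 1 + r := fun r hr => by
    apply Real.sqrt_le_iff.2 ⟨by linarith, by nlinarith⟩
  have hPn : ‖P n y‖ ≤ d + ‖F y‖ := by
    have := norm_add_le (P n y - F y) (F y)
    simpa using this
  have s2 : Real.sqrt (1 + ‖P n y‖ ^ 2) ≤ K + d := by
    linarith [s1 _ (norm_nonneg (P n y))]
  have s3 : Real.sqrt (1 + ‖F y‖ ^ 2) ≤ K := by
    linarith [s1 _ (norm_nonneg (F y))]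
  have s4 : Real.sqrt (1 + ‖P n y‖ ^ 2) * Real.sqrt (1 + ‖F y‖ ^ 2) ≤ (K + d) * K :=
    mul_le_mul s2 s3 (Real.sqrt_nonneg _) (by linarith)
  set m := min (1 / K) (ε / K ^ 2) with hm
  have m0 : 0 < m := by positivity
  have m1 : m * K ≤ 1 := by
    have : m ≤ 1 / K := min_le_left _ _
    rwa [le_div_iff₀ hK0] at this
  have m2 : m * K ^ 2 ≤ ε := by
    have : m ≤ ε / K ^ 2 := min_le_right _ _
    rwa [le_div_iff₀ (by positivity)] at this
  have h3 : 2 * d < m * ((K + d) * K) := lt_of_lt_of_le h1 (mul_le_mul_of_nonneg_left s4 m0.le)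
  rw [dist_comm, dist_eq_norm]
  nlinarith [mul_le_mul_of_nonneg_right m1 hd0]

/-- Primitives converge locally uniformly. -/
lemma tlu_prim {P G : ℕ → ℂ → ℂ} {F G0 : ℂ → ℂ}
    (hP : TendstoLocallyUniformlyOn P F atTop unitDisk)
    (hG : ∀ n, ∀ z ∈ unitDisk, HasDerivAt (G n) (P n z) z)
    (hG0 : ∀ z ∈ unitDisk, HasDerivAt G0 (F z) z)
    (h : ∀ n, G n 0 = 0) (h0 : G0 0 = 0) :
    TendstoLocallyUniformlyOn G G0 atTop unitDisk := by
  rw [tendstoLocallyUniformlyOn_iff_forall_isCompact isOpen_unitDisk] at hP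
  rw [Metric.tendstoLocallyUniformlyOn_iff]
  intro ε hε x hx
  have hx1 : ‖x‖ < 1 := by simpa [unitDisk] using hx
  obtain ⟨r, hr, hr1⟩ := exists_between hx1
  have hr0 : 0 < r := lt_of_le_of_lt (norm_nonneg x) hr
  have hsub : Metric.closedBall (0:ℂ) r ⊆ unitDisk := Metric.closedBall_subset_ball hr1
  refine ⟨Metric.ball 0 r, mem_nhdsWithin_of_mem_nhds
    (Metric.isOpen_ball.mem_nhds (by simpa using hr)), ?_⟩
  have hu := hP _ hsub (isCompact_closedBall _ _)
  rw [Metric.tendstoUniformlyOn_iff] at hu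
  filter_upwards [hu ε hε] with n hn y hy
  have hy' : ‖y‖ < r := by simpa using hy
  have hmv := (convex_closedBall (0:ℂ) r).norm_image_sub_le_of_norm_hasDerivWithin_le
    (f := fun z => G0 z - G n z) (f' := fun z => F z - P n z) (C := ε) (x := 0) (y := y)
    (fun z hz => ((hG0 z (hsub hz)).sub (hG n z (hsub hz))).hasDerivWithinAt)
    (fun z hz => by rw [← dist_eq_norm]; exact (hn z hz).le)
    (by simp [hr0.le]) (by simpa using hy'.le)
  simp only [h, h0, sub_zero] at hmv
  rw [dist_eq_norm]
  refine lt_of_le_of_lt hmv ?_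
  nlinarith

/-- Locally uniform convergence to a continuous limit implies continuous convergence. -/
lemma cc_of_tlu {P : ℕ → ℂ → ℂ} {F : ℂ → ℂ} (hF : ContinuousOn F unitDisk)
    (h : TendstoLocallyUniformlyOn P F atTop unitDisk) {x : ℂ} (hx : x ∈ unitDisk) :
    Tendsto (fun p : ℕ × ℂ => P p.1 p.2) (atTop ×ˢ 𝓝 x) (𝓝 (F x)) := by
  rw [Metric.tendsto_nhds]
  intro ε hε
  rw [Metric.tendstoLocallyUniformlyOn_iff] at h
  obtain ⟨t, ht, hn⟩ := h (ε / 2) (by positivity) x hx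
  rw [isOpen_unitDisk.nhdsWithin_eq hx] at ht
  have hc : ∀ᶠ y in 𝓝 x, dist (F y) (F x) < ε / 2 :=
    Metric.tendsto_nhds.1 (hF.continuousAt (isOpen_unitDisk.mem_nhds hx)) _ (by positivity)
  filter_upwards [hn.prod_mk ((eventually_mem_set.2 ht).and hc)] with p hp
  have h1 := hp.1 p.2 hp.2.1
  have h2 := hp.2.2
  have h3 := dist_triangle_left (P p.1 p.2) (F x) (F p.2)
  linarith

lemma tlu_of_cc {P : ℕ → ℂ → ℂ} {F : ℂ → ℂ} (hF : ContinuousOn F unitDisk)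
    (h : ∀ x ∈ unitDisk, Tendsto (fun p : ℕ × ℂ => P p.1 p.2) (atTop ×ˢ 𝓝 x) (𝓝 (F x))) :
    TendstoLocallyUniformlyOn P F atTop unitDisk := by
  rw [Metric.tendstoLocallyUniformlyOn_iff]
  intro ε hε x hx
  have h1 := Metric.tendsto_nhds.1 (h x hx) (ε / 2) (by positivity)
  have hc : ∀ᶠ y in 𝓝 x, dist (F y) (F x) < ε / 2 :=
    Metric.tendsto_nhds.1 (hF.continuousAt (isOpen_unitDisk.mem_nhds hx)) _ (by positivity)
  obtain ⟨pa, ha, pb, hb, hab⟩ := eventually_prod_iff.1 h1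
  refine ⟨{y | pb y ∧ dist (F y) (F x) < ε / 2}, mem_nhdsWithin_of_mem_nhds (hb.and hc), ?_⟩
  filter_upwards [ha] with n hn y hy
  have h2 := hab hn hy.1
  have h3 := hy.2
  have h4 := dist_triangle_right (F y) (P n y) (F x)
  simp only at h2
  linarith

lemma isPreconnected_unitDisk : IsPreconnected unitDisk :=
  (convex_ball (0:ℂ) 1).isPreconnected

/-- Structure of a single function. -/
lemma single_structure {f : ℂ → ℂ} (hd : ∀ z ∈ unitDisk, deriv f z ≠ 0) :
    ∃ G E : ℂ → ℂ, G 0 = 0 ∧ E 0 = 0 ∧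
      (∀ z ∈ unitDisk, HasDerivAt G (derivQuot 1 f z) z) ∧
      (∀ z ∈ unitDisk, HasDerivAt E (Complex.exp (G z)) z) ∧
      (∀ z ∈ unitDisk, deriv f z = deriv f 0 * Complex.exp (G z)) ∧
      (∀ z ∈ unitDisk, f z = f 0 + deriv f 0 * E z) := by
  have hf : DifferentiableOn ℂ f unitDisk := fun w hw =>
    (differentiableAt_of_deriv_ne_zero (hd w hw)).differentiableWithinAt
  have hf1 := hf.deriv isOpen_unitDisk
  have hf2 := hf1.deriv isOpen_unitDisk
  have hD : derivQuot 1 f = fun w => deriv (deriv f) w / deriv f w := by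
    ext w; simp [derivQuot, iteratedDeriv_succ]
  have hQ : DifferentiableOn ℂ (derivQuot 1 f) unitDisk := by
    rw [hD]; exact hf2.div hf1 hd
  obtain ⟨G, G0, hG⟩ := (DifferentiableOn.isExactOn_ball hQ).with_val_at 0 0
  have hGd : DifferentiableOn ℂ G unitDisk := fun z hz =>
    (hG z hz).differentiableAt.differentiableWithinAt
  have hexp : DifferentiableOn ℂ (fun z => Complex.exp (G z)) unitDisk := hGd.cexp
  obtain ⟨E, E0, hE⟩ := (DifferentiableOn.isExactOn_ball hexp).with_val_at 0 0
  have hA : ∀ z ∈ unitDisk, deriv f z = deriv f 0 * Complex.exp (G z) := by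
    intro z hz
    have hder : ∀ w ∈ unitDisk,
        HasDerivAt (fun w => deriv f w * Complex.exp (-G w)) 0 w := by
      intro w hw
      have e1 := (hf1.differentiableAt (isOpen_unitDisk.mem_nhds hw)).hasDerivAt
      have e2 := (hG w hw).neg.cexp
      refine (e1.mul e2).congr_deriv ?_
      rw [hD]
      have := hd w hw
      simp only [Pi.neg_apply]
      field_simp
      ring
    have := isOpen_unitDisk.is_const_of_deriv_eq_zero isPreconnected_unitDisk
      (fun w hw => (hder w hw).differentiableAt.differentiableWithinAt)
      (fun w hw => (hder w hw).deriv) hz zero_mem_unitDisk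
    simp only [G0, neg_zero, Complex.exp_zero, mul_one] at this
    rw [← this, mul_assoc, ← Complex.exp_add]
    simp
  refine ⟨G, E, G0, E0, hG, hE, hA, ?_⟩
  intro z hz
  have hder : ∀ w ∈ unitDisk, HasDerivAt (fun w => f w - deriv f 0 * E w) 0 w := by
    intro w hw
    have e1 := (hf.differentiableAt (isOpen_unitDisk.mem_nhds hw)).hasDerivAt
    have e2 := (hE w hw).const_mul (deriv f 0)
    refine (e1.sub e2).congr_deriv ?_
    rw [hA w hw]; ring
  have := isOpen_unitDisk.is_const_of_deriv_eq_zero isPreconnected_unitDisk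
    (fun w hw => (hder w hw).differentiableAt.differentiableWithinAt)
    (fun w hw => (hder w hw).deriv) hz zero_mem_unitDisk
  simp only [E0, mul_zero, sub_zero] at this
  rw [← this]; ring

/-- Main structural lemma: after passing to a subsequence, the logarithmic derivatives are given
by homogeneous coordinates that converge to a nondegenerate limit. -/
lemma core_structure (f : ℕ → ℂ → ℂ) (F1 : ℂ → ℂ) (hF1 : DifferentiableOn ℂ F1 unitDisk)
    (hconv : SphLocUnifOn (fun n => toSphere (derivQuot 1 (f n)))
      (fun z => (F1 z : OnePoint ℂ)) unitDisk)
    (hzf : ∀ n, ∀ z ∈ unitDisk, deriv (f n) z ≠ 0) (φ : ℕ → ℕ) (hφ : StrictMono φ) :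
    ∃ ψ : ℕ → ℕ, StrictMono ψ ∧ ∃ (A B : ℕ → ℂ → ℂ) (a b : ℂ → ℂ),
      (∀ k, ∀ z ∈ unitDisk,
        toSphere (derivQuot 0 (f (φ (ψ k)))) z = sphPt (A k z) (B k z)) ∧
      (∀ k, ∀ z ∈ unitDisk, A k z ≠ 0 ∨ B k z ≠ 0) ∧
      (∀ z ∈ unitDisk, a z ≠ 0 ∨ b z ≠ 0) ∧
      ContinuousOn a unitDisk ∧ ContinuousOn b unitDisk ∧
      (∀ x ∈ unitDisk, Tendsto (fun p : ℕ × ℂ => A p.1 p.2) (atTop ×ˢ 𝓝 x) (𝓝 (a x))) ∧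
      (∀ x ∈ unitDisk, Tendsto (fun p : ℕ × ℂ => B p.1 p.2) (atTop ×ˢ 𝓝 x) (𝓝 (b x))) ∧
      ∃ z ∈ unitDisk, b z ≠ 0 := by
  choose G E hG0 hE0 hG hE hfd hfE using fun n => single_structure (hzf n)
  have hP : TendstoLocallyUniformlyOn (fun n => derivQuot 1 (f n)) F1 atTop unitDisk := by
    apply tlu_of_sph hF1.continuousOn
    intro ε hε x hx
    obtain ⟨t, ht, hn⟩ := hconv ε hε x hx
    refine ⟨t ∩ unitDisk, inter_mem ht self_mem_nhdsWithin, ?_⟩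
    filter_upwards [hn] with n hn y hy
    have := hn y hy.1
    have hQ : DifferentiableOn ℂ (derivQuot 1 (f n)) unitDisk :=
      Complex.IsExactOn.differentiableOn isOpen_unitDisk ⟨G n, hG n⟩
    have hp := not_mem_polesOf (hQ.continuousOn.continuousAt (isOpen_unitDisk.mem_nhds hy.2))
    simpa [toSphere, hp] using this
  obtain ⟨g, g0, hg⟩ := (DifferentiableOn.isExactOn_ball hF1).with_val_at 0 0
  have hgd : DifferentiableOn ℂ g unitDisk := fun z hz =>
    (hg z hz).differentiableAt.differentiableWithinAt
  obtain ⟨e, e0, he⟩ := (DifferentiableOn.isExactOn_ball (c := 0) (r := 1) hgd.cexp).with_val_at 0 0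
  have hec : ContinuousOn e unitDisk := fun z hz => (he z hz).continuousAt.continuousWithinAt
  have hGt : TendstoLocallyUniformlyOn G g atTop unitDisk := tlu_prim hP hG hg hG0 g0
  have hexpcc : ∀ x ∈ unitDisk, Tendsto (fun p : ℕ × ℂ => Complex.exp (G p.1 p.2))
      (atTop ×ˢ 𝓝 x) (𝓝 (Complex.exp (g x))) := fun x hx =>
    (Complex.continuous_exp.tendsto _).comp (cc_of_tlu hgd.continuousOn hGt hx)
  have hEt : TendstoLocallyUniformlyOn E e atTop unitDisk :=
    tlu_prim (tlu_of_cc (P := fun n z => Complex.exp (G n z)) hgd.cexp.continuousOn hexpcc)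
      hE he hE0 e0
  have hEcc : ∀ x ∈ unitDisk, Tendsto (fun p : ℕ × ℂ => E p.1 p.2)
      (atTop ×ˢ 𝓝 x) (𝓝 (e x)) := fun x hx => cc_of_tlu hec hEt hx
  -- normalise the initial data
  let v : ℕ → ℂ × ℂ := fun n => (deriv (f n) 0, f n 0)
  have hv : ∀ n, v n ≠ 0 := fun n hn => hzf n 0 zero_mem_unitDisk (congrArg Prod.fst hn)
  let c : ℕ → ℂ := fun n => ((‖v n‖⁻¹ : ℝ) : ℂ)
  have hc : ∀ n, c n ≠ 0 := fun n => by
    have := norm_pos_iff.2 (hv n)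
    exact Complex.ofReal_ne_zero.2 (inv_ne_zero this.ne')
  have hmem : ∀ n, c n • v n ∈ Metric.sphere (0 : ℂ × ℂ) 1 := fun n => by
    have := norm_pos_iff.2 (hv n)
    rw [mem_sphere_zero_iff_norm, norm_smul, Complex.norm_real, norm_inv, norm_norm,
      inv_mul_cancel₀ this.ne']
  obtain ⟨w, hw, ψ, hψ, hlim⟩ :=
    (isCompact_sphere (0 : ℂ × ℂ) 1).tendsto_subseq (fun k => hmem (φ k))
  have hw0 : w ≠ 0 := fun h => by simp [h] at hw
  obtain ⟨s, t⟩ := w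
  have hs := (continuous_fst.tendsto _).comp hlim
  have ht := (continuous_snd.tendsto _).comp hlim
  simp only [Function.comp_def] at hs ht
  have hst : s ≠ 0 ∨ t ≠ 0 := by
    by_contra! h
    exact hw0 (by simp [h.1, h.2])
  have hsub : Tendsto (fun k => φ (ψ k)) atTop atTop := hφ.tendsto_atTop.comp hψ.tendsto_atTop
  have hpsub : ∀ x : ℂ, Tendsto (fun p : ℕ × ℂ => (φ (ψ p.1), p.2)) (atTop ×ˢ 𝓝 x)
      (atTop ×ˢ 𝓝 x) := fun x => hsub.prodMap tendsto_id
  refine ⟨ψ, hψ, fun k z => (c (φ (ψ k)) * deriv (f (φ (ψ k))) 0) * Complex.exp (G (φ (ψ k)) z),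
    fun k z => c (φ (ψ k)) * f (φ (ψ k)) 0 +
      (c (φ (ψ k)) * deriv (f (φ (ψ k))) 0) * E (φ (ψ k)) z,
    fun z => s * Complex.exp (g z), fun z => t + s * e z, ?_, ?_, ?_, ?_, ?_, ?_, ?_, ?_⟩
  · intro k z hz
    rw [toSphere_logDeriv (hzf _) hz, hfd _ z hz, hfE _ z hz, ← sphPt_scale _ _ _ (hc (φ (ψ k)))]
    congr 1 <;> ring
  · intro k z hz
    exact Or.inl (mul_ne_zero (mul_ne_zero (hc _) (hzf _ 0 zero_mem_unitDisk))
      (Complex.exp_ne_zero _))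
  · intro z hz
    by_cases h : s = 0
    · right
      simpa [h] using hst
    · exact Or.inl (mul_ne_zero h (Complex.exp_ne_zero _))
  · exact continuousOn_const.mul hgd.cexp.continuousOn
  · exact continuousOn_const.add (continuousOn_const.mul hec)
  · intro x hx
    exact (hs.comp tendsto_fst).mul ((hexpcc x hx).comp (hpsub x))
  · intro x hx
    exact (ht.comp tendsto_fst).add
      ((hs.comp tendsto_fst).mul ((hEcc x hx).comp (hpsub x)))
  · by_contra! h
    have h0 := h 0 zero_mem_unitDisk
    have ht0 : t = 0 := by simpa [e0] using h0
    have h1 : HasDerivAt (fun z => t + s * e z) (s * Complex.exp (g 0)) 0 :=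
      ((he 0 zero_mem_unitDisk).const_mul s).const_add t
    have h2 : (fun z => t + s * e z) =ᶠ[𝓝 0] fun _ => 0 := by
      filter_upwards [isOpen_unitDisk.mem_nhds zero_mem_unitDisk] with z hz using h z hz
    have h3 := h1.unique ((hasDerivAt_const (0:ℂ) (0:ℂ)).congr_of_eventuallyEq h2)
    have hs0 : s = 0 := by simpa [Complex.exp_ne_zero] using h3
    exact hw0 (by simp [hs0, ht0])

/-- **Lemma (normality of the logarithmic derivatives when `E = ∅`).**
Let the `fₙ` be meromorphic on `𝔻`, with `fₙ''/fₙ'` converging locally uniformly on all of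
`𝔻` to `F₁` holomorphic on `𝔻`, and `fₙ'` zero-free on `𝔻` for every `n`. Then `(fₙ'/fₙ)ₙ`
is normal on `𝔻` and no subsequence of `(fₙ'/fₙ)ₙ` converges locally uniformly to the
constant `∞` on `𝔻`. -/
theorem normal_log_derivatives_from_preSchwarzian
    (f : ℕ → ℂ → ℂ) (hf : ∀ n, MeromorphicOn (f n) unitDisk)
    (F1 : ℂ → ℂ) (hF1 : DifferentiableOn ℂ F1 unitDisk)
    (hconv : SphLocUnifOn (fun n => toSphere (derivQuot 1 (f n)))
      (fun z => (F1 z : OnePoint ℂ)) unitDisk)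
    (hzf : ∀ n, ∀ z ∈ unitDisk, deriv (f n) z ≠ 0) :
    (∀ φ : ℕ → ℕ, StrictMono φ → ∃ ψ : ℕ → ℕ, StrictMono ψ ∧
      ∃ g : ℂ → OnePoint ℂ,
        SphLocUnifOn (fun k => toSphere (derivQuot 0 (f (φ (ψ k))))) g unitDisk) ∧
    ∀ φ : ℕ → ℕ, StrictMono φ →
      ¬ SphLocUnifOn (fun k => toSphere (derivQuot 0 (f (φ k))))
        (fun _ => OnePoint.infty) unitDisk := by
  constructor
  · intro φ hφ
    obtain ⟨ψ, hψ, A, B, a, b, hrep, hAB, hab, ha, hb, hA, hB, -⟩ :=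
      core_structure f F1 hF1 hconv hzf φ hφ
    refine ⟨ψ, hψ, fun z => sphPt (a z) (b z), ?_⟩
    intro ε hε x hx
    have ha' : Tendsto (fun p : ℕ × ℂ => a p.2) (atTop ×ˢ 𝓝 x) (𝓝 (a x)) :=
      (ha.continuousAt (isOpen_unitDisk.mem_nhds hx)).tendsto.comp tendsto_snd
    have hb' : Tendsto (fun p : ℕ × ℂ => b p.2) (atTop ×ˢ 𝓝 x) (𝓝 (b x)) :=
      (hb.continuousAt (isOpen_unitDisk.mem_nhds hx)).tendsto.comp tendsto_snd
    have hp := sqrt_pos_pair _ _ (hab x hx)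
    have hlim := ((((hA x hx).mul hb').sub (ha'.mul (hB x hx))).norm.const_mul 2).div
      ((((hA x hx).norm.pow 2).add ((hB x hx).norm.pow 2)).sqrt.mul
        ((ha'.norm.pow 2).add (hb'.norm.pow 2)).sqrt) (mul_pos hp hp).ne'
    simp only [sub_self, norm_zero, mul_zero, zero_div] at hlim
    obtain ⟨pa, hpa, pb, hpb, hpab⟩ := eventually_prod_iff.1 (hlim.eventually_lt_const hε)
    refine ⟨{y | pb y} ∩ unitDisk, inter_mem (mem_nhdsWithin_of_mem_nhds hpb)
      self_mem_nhdsWithin, ?_⟩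
    filter_upwards [hpa] with n hn y hy
    have h1 := hpab hn hy.1
    rw [hrep n y hy.2, sphDist_sphPt _ _ _ _ (hAB n y hy.2) (hab y hy.2)]
    exact h1
  · intro φ hφ hinf
    obtain ⟨ψ, hψ, A, B, a, b, hrep, hAB, hab, -, -, hA, hB, z, hz, hbz⟩ :=
      core_structure f F1 hF1 hconv hzf φ hφ
    apply hbz
    have hpt : Tendsto (fun n : ℕ => (n, z)) atTop (atTop ×ˢ 𝓝 z) :=
      tendsto_id.prodMk tendsto_const_nhds
    have hA' : Tendsto (fun n => A n z) atTop (𝓝 (a z)) := (hA z hz).comp hpt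
    have hB' : Tendsto (fun n => B n z) atTop (𝓝 (b z)) := (hB z hz).comp hpt
    have hp := sqrt_pos_pair _ _ (hab z hz)
    have hlim := (hB'.norm.const_mul 2).div (((hA'.norm.pow 2).add (hB'.norm.pow 2)).sqrt) hp.ne'
    have hle : 2 * ‖b z‖ / Real.sqrt (‖a z‖ ^ 2 + ‖b z‖ ^ 2) ≤ 0 := by
      refine le_of_forall_pos_le_add fun ε hε => ?_
      rw [zero_add]
      obtain ⟨t, ht, hn⟩ := hinf ε hε z hz
      have hzt : z ∈ t := mem_of_mem_nhdsWithin hz ht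
      refine le_of_tendsto hlim ?_
      filter_upwards [hψ.tendsto_atTop.eventually hn] with n hn
      have h1 := hn z hzt
      have hI : (OnePoint.infty : OnePoint ℂ) = sphPt 1 0 := by simp [sphPt]
      rw [hrep n z hz, hI, sphDist_sphPt _ _ _ _ (hAB n z hz) (Or.inl one_ne_zero)] at h1
      simpa using h1.le
    have h0 : 0 ≤ 2 * ‖b z‖ / Real.sqrt (‖a z‖ ^ 2 + ‖b z‖ ^ 2) := by positivity
    have h2 := le_antisymm hle h0
    rw [div_eq_zero_iff] at h2
    rcases h2 with h2 | h2
    · simpa using h2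
    · exact absurd h2 hp.ne'

end
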